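/- arXiv:1506.06922 — 3 statements merged into one kernel-verified Lean document; each statement's English description precedes it below -/
import Mathlib

section
/- A continuous function f : (0,∞) → (0,∞) is operator monotone decreasing if and only if f(A !_t B) ≥ f(A) #_t f(B) for every n ∈ ℕ, all n×n positive definite complex matrices A, B, and every t ∈ [0,1]. -/
open Matrix
open scoped ComplexOrder

/-- The Loewner order on matrices: `A ≤ B` iff `B - A` is positive semidefinite. -/
def MLE {n : ℕ} (A B : Matrix (Fin n) (Fin n) ℂ) : Prop := (B - A).PosSemidef

/-- The `t`-weighted harmonic mean `A !_t B = ((1-t)A⁻¹ + tB⁻¹)⁻¹`. -/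
noncomputable def wharm {n : ℕ} (t : ℝ) (A B : Matrix (Fin n) (Fin n) ℂ) :
    Matrix (Fin n) (Fin n) ℂ := ((1 - t) • A⁻¹ + t • B⁻¹)⁻¹

/-- The `t`-weighted arithmetic mean `A ∇_t B = (1-t)A + tB`. -/
noncomputable def warith {n : ℕ} (t : ℝ) (A B : Matrix (Fin n) (Fin n) ℂ) :
    Matrix (Fin n) (Fin n) ℂ := (1 - t) • A + t • B

/-- Real powers of a matrix, via the continuous functional calculus. -/
noncomputable def mpow {n : ℕ} (A : Matrix (Fin n) (Fin n) ℂ) (r : ℝ) :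
    Matrix (Fin n) (Fin n) ℂ := cfc (fun x : ℝ => x ^ r) A

/-- The `t`-weighted geometric mean `A #_t B = A^{1/2} (A^{-1/2} B A^{-1/2})^t A^{1/2}`. -/
noncomputable def wgeom {n : ℕ} (t : ℝ) (A B : Matrix (Fin n) (Fin n) ℂ) :
    Matrix (Fin n) (Fin n) ℂ :=
  mpow A (1/2) * mpow (mpow A (-(1/2)) * B * mpow A (-(1/2))) t * mpow A (1/2)

/-- `f` is operator monotone (increasing): order preserving on positive definite
matrices of every size, via the continuous functional calculus. -/
def OperatorMonotone (f : ℝ → ℝ) : Prop :=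
  ∀ (n : ℕ) (A B : Matrix (Fin n) (Fin n) ℂ), A.PosDef → B.PosDef →
    MLE A B → MLE (cfc f A) (cfc f B)

/-- `f` is operator monotone decreasing: order reversing on positive definite
matrices of every size, via the continuous functional calculus. -/
def OperatorAntitone (f : ℝ → ℝ) : Prop :=
  ∀ (n : ℕ) (A B : Matrix (Fin n) (Fin n) ℂ), A.PosDef → B.PosDef →
    MLE A B → MLE (cfc f B) (cfc f A)

/-!
If `f` is operator antitone, then `x ↦ f x⁻¹` is operator monotone, hence operator concave, which
says that `f (A !_t B)` dominates the arithmetic mean of `f A` and `f B`, and a fortiori their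
geometric mean. Monotonicity yields concavity because a rotation by blocks turns `diag(A, B)` into a
block matrix with corner `A ∇_t B`, and a block matrix is dominated by a block diagonal one whose
first block is only slightly larger.

Conversely, the inequality says that `g x = (f x⁻¹)⁻¹` is operator log-convex. In particular `g` is
operator convex, and testing this on `2 × 2` matrices shows that `g` grows at most quadratically.
For `A ≤ B` write `B = A ∇_s C` with `C = A + s⁻¹ (B - A)`. Log-convexity bounds `g B` by
`g A #_s g C`, where `g C = O(s⁻²)`, and since `(s⁻²) ^ s → 1`, letting `s → 0` gives `g B ≤ g A`.
-/

/-! ### Functional calculus of positive definite matrices -/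

section

open scoped MatrixOrder

variable {ι : Type*} [Fintype ι] [DecidableEq ι] {A B : Matrix ι ι ℂ}

lemma continuousOn_spectrum (f : ℝ → ℝ) (A : Matrix ι ι ℂ) : ContinuousOn f (spectrum ℝ A) :=
  finite_real_spectrum.continuousOn f

lemma posDef_cfc (hA : A.PosDef) {f : ℝ → ℝ} (hf : ∀ x, 0 < x → 0 < f x) : (cfc f A).PosDef := by
  refine isStrictlyPositive_iff_posDef.1 ((cfc_isStrictlyPositive_iff f A
    (continuousOn_spectrum _ _) hA.isHermitian.isSelfAdjoint).2 fun x hx => ?_)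
  exact hf x (hA.isStrictlyPositive.spectrum_pos hx)

lemma cfc_congr_of_posDef (hA : A.PosDef) {f g : ℝ → ℝ} (hfg : ∀ x, 0 < x → f x = g x) :
    cfc f A = cfc g A :=
  cfc_congr fun x hx => hfg x (hA.isStrictlyPositive.spectrum_pos hx)

lemma inv_cfc (hA : A.PosDef) {f : ℝ → ℝ} (hf : ∀ x, 0 < x → 0 < f x) :
    (cfc f A)⁻¹ = cfc (fun x => (f x)⁻¹) A := by
  rw [nonsing_inv_eq_ringInverse, cfc_inv f A
    (fun x hx => (hf x (hA.isStrictlyPositive.spectrum_pos hx)).ne')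
    (continuousOn_spectrum _ _) hA.isHermitian.isSelfAdjoint]

lemma cfc_inv_apply (hA : A.PosDef) (f : ℝ → ℝ) : cfc f A⁻¹ = cfc (fun x => f x⁻¹) A := by
  rw [nonsing_inv_eq_ringInverse, Ring.inverse_of_isUnit hA.isUnit]
  exact (cfc_comp_inv f hA.isUnit.unit
    ((finite_real_spectrum.image _).continuousOn f) hA.isHermitian.isSelfAdjoint).symm

lemma inv_inv_of_posDef (hA : A.PosDef) : A⁻¹⁻¹ = A :=
  nonsing_inv_nonsing_inv _ ((isUnit_iff_isUnit_det _).1 hA.isUnit)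

lemma inv_le_inv_of_posDef (hA : A.PosDef) (h : A ≤ B) : B⁻¹ ≤ A⁻¹ := by
  open scoped Matrix.Norms.L2Operator in
  simpa only [nonsing_inv_eq_ringInverse] using
    CStarAlgebra.ringInverse_le_ringInverse h hA.isStrictlyPositive

lemma exists_le_algebraMap_of_isHermitian (hA : A.IsHermitian) : ∃ r : ℝ, A ≤ algebraMap ℝ _ r := by
  open scoped Matrix.Norms.L2Operator in
  exact ⟨_, hA.isSelfAdjoint.le_algebraMap_norm_self⟩

lemma exists_pos_algebraMap_le_of_posDef (hA : A.PosDef) :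
    ∃ r : ℝ, 0 < r ∧ algebraMap ℝ _ r ≤ A := by
  rcases subsingleton_or_nontrivial (Matrix ι ι ℂ)
  · exact ⟨1, one_pos, (Subsingleton.elim _ _).le⟩
  · open scoped Matrix.Norms.L2Operator in
    exact (CFC.exists_pos_algebraMap_le_iff hA.isHermitian.isSelfAdjoint).2
      fun x hx => hA.isStrictlyPositive.spectrum_pos hx

end

/-! ### Weighted means -/

section

open scoped MatrixOrder

variable {n : ℕ} {A B : Matrix (Fin n) (Fin n) ℂ} {t : ℝ}

lemma warith_posDef (hA : A.PosDef) (hB : B.PosDef) (ht : t ∈ Set.Icc (0 : ℝ) 1) :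
    (warith t A B).PosDef := by
  rw [warith]
  rcases ht.1.eq_or_lt with rfl | ht₀
  · simpa
  · exact .posSemidef_add (hA.posSemidef.smul (sub_nonneg.2 ht.2)) (hB.smul ht₀)

lemma mpow_posDef (hA : A.PosDef) (r : ℝ) : (mpow A r).PosDef :=
  posDef_cfc hA fun _ hx => Real.rpow_pos_of_pos hx r

lemma mpow_mul_mpow (hA : A.PosDef) (r s : ℝ) : mpow A r * mpow A s = mpow A (r + s) := by
  rw [mpow, mpow, ← cfc_mul _ _ A (continuousOn_spectrum _ _) (continuousOn_spectrum _ _)]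
  exact cfc_congr_of_posDef hA fun x hx => (Real.rpow_add hx r s).symm

lemma mpow_zero (hA : A.IsHermitian) : mpow A 0 = 1 := by
  simpa only [mpow, Real.rpow_zero] using cfc_const_one ℝ A hA.isSelfAdjoint

lemma mpow_one (hA : A.IsHermitian) : mpow A 1 = A := by
  simpa only [mpow, Real.rpow_one] using cfc_id' ℝ A hA.isSelfAdjoint

lemma mpow_neg_mul_mpow (hA : A.PosDef) (r : ℝ) : mpow A (-r) * mpow A r = 1 := by
  rw [mpow_mul_mpow hA, neg_add_cancel, mpow_zero hA.isHermitian]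

lemma mpow_mul_mpow_neg (hA : A.PosDef) (r : ℝ) : mpow A r * mpow A (-r) = 1 := by
  rw [mpow_mul_mpow hA, add_neg_cancel, mpow_zero hA.isHermitian]

lemma mpow_half_mul_self (hA : A.PosDef) : mpow A (1 / 2) * mpow A (1 / 2) = A := by
  rw [mpow_mul_mpow hA, add_halves, mpow_one hA.isHermitian]

lemma mpow_inv (hA : A.PosDef) (r : ℝ) : mpow A⁻¹ r = (mpow A r)⁻¹ := by
  rw [mpow, mpow, cfc_inv_apply hA, inv_cfc hA fun x hx => Real.rpow_pos_of_pos hx r]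
  exact cfc_congr_of_posDef hA fun x hx => Real.inv_rpow hx.le r

lemma mpow_smul (hA : A.PosDef) {c : ℝ} (hc : 0 ≤ c) (r : ℝ) :
    mpow (c • A) r = c ^ r • mpow A r := by
  rw [mpow, ← cfc_comp_smul c (· ^ r) A ((finite_real_spectrum.image _).continuousOn _)
    hA.isHermitian.isSelfAdjoint, mpow, ← cfc_smul _ _ A (continuousOn_spectrum _ _)]
  exact cfc_congr_of_posDef hA fun x hx => Real.mul_rpow hc hx.le

lemma mpow_le_warith_one (hA : A.PosDef) (ht : t ∈ Set.Icc (0 : ℝ) 1) :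
    mpow A t ≤ warith t 1 A := by
  have warith_eq : warith t 1 A = cfc (fun x : ℝ => (1 - t) + t * x) A := by
    rw [cfc_const_add _ _ A (continuousOn_spectrum _ _)
        hA.isHermitian.isSelfAdjoint,
      cfc_const_mul_id t A hA.isHermitian.isSelfAdjoint, warith, Algebra.algebraMap_eq_smul_one]
  rw [warith_eq]
  refine cfc_mono (fun x hx => ?_) (continuousOn_spectrum _ _) (continuousOn_spectrum _ _)
  simpa using Real.geom_mean_le_arith_mean2_weighted (sub_nonneg.2 ht.2) ht.1 zero_le_one
    (hA.isStrictlyPositive.spectrum_pos hx).le (sub_add_cancel 1 t)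

lemma conj_mpow_posDef (hA : A.PosDef) (hB : B.PosDef) (r : ℝ) :
    (mpow A r * B * mpow A r).PosDef := by
  have hconj := hB.conjTranspose_mul_mul_same
    (mulVec_injective_of_isUnit (mpow_posDef hA r).isUnit)
  rwa [(mpow_posDef hA r).isHermitian.eq] at hconj

lemma conj_mpow_conj_mpow_neg (hA : A.PosDef) (r : ℝ) :
    mpow A r * (mpow A (-r) * B * mpow A (-r)) * mpow A r = B := by
  calc mpow A r * (mpow A (-r) * B * mpow A (-r)) * mpow A r
      = (mpow A r * mpow A (-r)) * B * (mpow A (-r) * mpow A r) := by simp only [mul_assoc]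
    _ = B := by rw [mpow_mul_mpow_neg hA, mpow_neg_mul_mpow hA, one_mul, mul_one]

lemma wgeom_posDef (hA : A.PosDef) (hB : B.PosDef) (t : ℝ) : (wgeom t A B).PosDef :=
  conj_mpow_posDef hA (mpow_posDef (conj_mpow_posDef hA hB _) t) _

lemma wgeom_inv_inv (hA : A.PosDef) (hB : B.PosDef) (t : ℝ) :
    wgeom t A⁻¹ B⁻¹ = (wgeom t A B)⁻¹ := by
  have conj_inv : (mpow A (-(1 / 2)))⁻¹ * B⁻¹ * (mpow A (-(1 / 2)))⁻¹ =
      (mpow A (-(1 / 2)) * B * mpow A (-(1 / 2)))⁻¹ := by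
    rw [Matrix.mul_inv_rev, Matrix.mul_inv_rev, mul_assoc]
  rw [wgeom, wgeom, mpow_inv hA, mpow_inv hA, conj_inv, mpow_inv (conj_mpow_posDef hA hB _),
    Matrix.mul_inv_rev, Matrix.mul_inv_rev, mul_assoc]

lemma wgeom_smul_right (hA : A.PosDef) (hB : B.PosDef) {c : ℝ} (hc : 0 ≤ c) (t : ℝ) :
    wgeom t A (c • B) = c ^ t • wgeom t A B := by
  simp only [wgeom, mul_smul_comm, smul_mul_assoc, mpow_smul (conj_mpow_posDef hA hB _) hc]

lemma wgeom_le_warith (hA : A.PosDef) (hB : B.PosDef) (ht : t ∈ Set.Icc (0 : ℝ) 1) :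
    wgeom t A B ≤ warith t A B := by
  have key := (mpow_posDef hA (1 / 2)).isHermitian.isSelfAdjoint.conjugate_le_conjugate
    (mpow_le_warith_one (conj_mpow_posDef hA hB (-(1 / 2))) ht)
  have warith_eq : mpow A (1 / 2) * warith t 1 (mpow A (-(1 / 2)) * B * mpow A (-(1 / 2))) *
      mpow A (1 / 2) = warith t A B := by
    simp only [warith, mul_add, add_mul, mul_smul_comm, smul_mul_assoc, mul_one,
      mpow_half_mul_self hA, conj_mpow_conj_mpow_neg hA]
  exact key.trans_eq warith_eq

lemma wgeom_le_rpow_smul_warith (hA : A.PosDef) (hB : B.PosDef) (ht : t ∈ Set.Icc (0 : ℝ) 1)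
    {c : ℝ} (hc : 0 < c) : wgeom t A B ≤ c ^ (-t) • warith t A (c • B) := by
  calc wgeom t A B = c ^ (-t) • wgeom t A (c • B) := by
        rw [wgeom_smul_right hA hB hc.le, smul_smul, ← Real.rpow_add hc, neg_add_cancel,
          Real.rpow_zero, one_smul]
    _ ≤ c ^ (-t) • warith t A (c • B) :=
        smul_le_smul_of_nonneg_left (wgeom_le_warith hA (hB.smul hc) ht) (by positivity)

end

/-! ### Growth of operator convex functions -/

section

open scoped MatrixOrder

variable {ι : Type*} [Fintype ι] [DecidableEq ι]

lemma cfc_eq_algebraMap_add_slope_smul {M : Matrix ι ι ℂ} (hM : M.IsHermitian) {a b : ℝ}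
    (hab : (M - algebraMap ℝ _ a) * (M - algebraMap ℝ _ b) = 0) (g : ℝ → ℝ) :
    cfc g M = algebraMap ℝ _ (g a) + slope g a b • (M - algebraMap ℝ _ a) := by
  nontriviality Matrix ι ι ℂ
  have spectrum_subset : ∀ x ∈ spectrum ℝ M, x = a ∨ x = b := fun x hx => by
    have root := spectrum.subset_polynomial_aeval M
      ((Polynomial.X - Polynomial.C a) * (Polynomial.X - Polynomial.C b)) ⟨x, hx, rfl⟩
    simpa [hab, sub_eq_zero] using root
  have interpolate : cfc g M = cfc (fun x => g a + slope g a b * (x - a)) M := by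
    refine cfc_congr fun x hx => ?_
    rcases spectrum_subset x hx with rfl | rfl
    · simp
    · linear_combination (norm := (simp; ring)) -sub_smul_slope g a x
  rw [interpolate, cfc_const_add _ _ M (continuousOn_spectrum _ _) hM.isSelfAdjoint,
    cfc_const_mul _ _ M (continuousOn_spectrum _ _), cfc_sub _ _ M (continuousOn_spectrum _ _)
      (continuousOn_spectrum _ _), cfc_id' ℝ M hM.isSelfAdjoint, cfc_const a M hM.isSelfAdjoint]

lemma cfc_apply_self_eq_add_slope_mul {M : Matrix ι ι ℂ} (hM : M.IsHermitian) {a b : ℝ}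
    (hab : (M - algebraMap ℝ _ a) * (M - algebraMap ℝ _ b) = 0) (g : ℝ → ℝ) (i : ι) :
    cfc g M i i = g a + slope g a b * (M i i - a) := by
  simp [cfc_eq_algebraMap_add_slope_smul hM hab, algebraMap_matrix_apply]

lemma cfc_fin_two_apply_one_one {p : ℝ} (hp : p ≠ 0) (a c : ℝ) (g : ℝ → ℝ) :
    cfc g !![((a + c * p : ℝ) : ℂ), c; c, ((a + c * p⁻¹ : ℝ) : ℂ)] 1 1 =
      ((g a + (g (a + c * (p + p⁻¹)) - g a) / (p ^ 2 + 1) : ℝ) : ℂ) := by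
  have weight : slope g a (a + c * (p + p⁻¹)) * (c * p⁻¹) =
      (g (a + c * (p + p⁻¹)) - g a) / (p ^ 2 + 1) := by
    rw [eq_div_iff (by positivity), ← vsub_eq_sub, ← sub_smul_slope, smul_eq_mul]
    field_simp
    ring
  rw [cfc_apply_self_eq_add_slope_mul (a := a) (b := a + c * (p + p⁻¹)), ← weight]
  · simp
  · ext i j
    fin_cases i <;> fin_cases j <;> simp
  · ext i j
    fin_cases i <;> fin_cases j <;> simp [mul_apply, algebraMap_matrix_apply] <;>
      field_simp <;> ring

/-- Operator convexity on the positive definite matrices of every size; it limits the growth of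
`g` at infinity. -/
def OperatorConvex (g : ℝ → ℝ) : Prop :=
  ∀ (n : ℕ) (A B : Matrix (Fin n) (Fin n) ℂ), A.PosDef → B.PosDef → ∀ t ∈ Set.Icc (0 : ℝ) 1,
    cfc g (warith t A B) ≤ warith t (cfc g A) (cfc g B)

/-- Operator log-convexity on the positive definite matrices of every size: operator convexity with
the arithmetic mean of the values replaced by the geometric mean. -/
def OperatorLogConvex (g : ℝ → ℝ) : Prop :=
  ∀ (n : ℕ) (A B : Matrix (Fin n) (Fin n) ℂ), A.PosDef → B.PosDef → ∀ t ∈ Set.Icc (0 : ℝ) 1,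
    cfc g (warith t A B) ≤ wgeom t (cfc g A) (cfc g B)

variable {g : ℝ → ℝ}

lemma OperatorLogConvex.operatorConvex (hg : OperatorLogConvex g) (hpos : ∀ x, 0 < x → 0 < g x) :
    OperatorConvex g := fun n A B hA hB t ht =>
  (hg n A B hA hB t ht).trans (wgeom_le_warith (posDef_cfc hA hpos) (posDef_cfc hB hpos) ht)

lemma OperatorConvex.apply_two_add_inv_le (hg : OperatorConvex g) {p : ℝ} (hp : 0 < p) :
    g 2 + (g (2 + p + p⁻¹) - g 2) / (p ^ 2 + 1) ≤ g (1 + 2 * p⁻¹) / 2 + (g 1 + g 5) / 4 := by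
  -- The mean of `A` and `B` has the eigenvalues `2` and `2 + p + p⁻¹`; its lower right entry gives
  -- the large one weight only `1 / (p ^ 2 + 1)`, while those of `A` and `B` stay bounded in `p`.
  let A : Matrix (Fin 2) (Fin 2) ℂ := diagonal ![((1 + 2 * p : ℝ) : ℂ), ((1 + 2 * p⁻¹ : ℝ) : ℂ)]
  let B : Matrix (Fin 2) (Fin 2) ℂ :=
    !![((1 + 2 * 1 : ℝ) : ℂ), (2 : ℝ); (2 : ℝ), ((1 + 2 * 1⁻¹ : ℝ) : ℂ)]
  have hA : A.PosDef := by
    refine PosDef.diagonal (Fin.forall_fin_two.2 ⟨?_, ?_⟩) <;>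
      exact Complex.zero_lt_real.2 (by positivity)
  have hB : B.PosDef := by
    rw [show B = 1 + (2 : ℝ) • vecMulVec 1 (star 1) by
      ext i j; fin_cases i <;> fin_cases j <;> simp [B]]
    exact PosDef.one.add_posSemidef ((posSemidef_vecMulVec_self_star 1).smul zero_le_two)
  have warith_eq : warith (1 / 2) A B =
      !![((2 + 1 * p : ℝ) : ℂ), (1 : ℝ); (1 : ℝ), ((2 + 1 * p⁻¹ : ℝ) : ℂ)] := by
    ext i j
    fin_cases i <;> fin_cases j <;> simp [warith, A, B] <;> ring
  have cfc_A : cfc g A 1 1 = g (1 + 2 * p⁻¹) := by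
    rw [cfc_apply_self_eq_add_slope_mul hA.isHermitian (a := 1 + 2 * p⁻¹) (b := 1 + 2 * p)]
    · simp [A]
    · ext i j
      fin_cases i <;> fin_cases j <;> simp [A, mul_apply, algebraMap_matrix_apply]
  have entry_nonneg := (Matrix.le_iff.1 (hg 2 A B hA hB (1 / 2) (by norm_num))).diag_nonneg (i := 1)
  rw [warith_eq, Matrix.sub_apply, cfc_fin_two_apply_one_one hp.ne', warith, Matrix.add_apply,
    Matrix.smul_apply, Matrix.smul_apply, cfc_A, cfc_fin_two_apply_one_one one_ne_zero,
    Complex.real_smul, Complex.real_smul] at entry_nonneg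
  norm_cast at entry_nonneg
  norm_num [add_assoc] at entry_nonneg ⊢
  linarith

lemma exists_two_add_add_inv_eq {x : ℝ} (hx : 4 ≤ x) : ∃ p : ℝ, 1 ≤ p ∧ 2 + p + p⁻¹ = x := by
  refine ⟨Real.exp (Real.arcosh ((x - 2) / 2)),
    Real.one_le_exp (Real.arcosh_nonneg (by linarith)), ?_⟩
  rw [← Real.exp_neg]
  linarith [Real.cosh_eq (Real.arcosh ((x - 2) / 2)),
    Real.cosh_arcosh (x := (x - 2) / 2) (by linarith)]

lemma OperatorConvex.le_mul_sq_of_four_le (hg : OperatorConvex g) {C : ℝ}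
    (hC : ∀ x ∈ Set.Icc (1 : ℝ) 5, g x ≤ C) (h2 : 0 ≤ g 2) {x : ℝ} (hx : 4 ≤ x) :
    g x ≤ C * x ^ 2 := by
  obtain ⟨p, hp, rfl⟩ := exists_two_add_add_inv_eq hx
  have hp₀ : 0 < p := one_pos.trans_le hp
  have inv_le : p⁻¹ ≤ 1 := inv_le_one_of_one_le₀ hp
  have inv_pos : 0 < p⁻¹ := inv_pos.2 hp₀
  have C_nonneg : 0 ≤ C := h2.trans (hC 2 (by norm_num))
  have weighted_le : (g (2 + p + p⁻¹) - g 2) / (p ^ 2 + 1) ≤ C - g 2 := by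
    linarith [hg.apply_two_add_inv_le hp₀, hC (1 + 2 * p⁻¹) ⟨by linarith, by linarith⟩,
      hC 1 (by norm_num), hC 5 (by norm_num)]
  have sub_le : g (2 + p + p⁻¹) - g 2 ≤ (C - g 2) * (p ^ 2 + 1) :=
    (div_le_iff₀ (by positivity)).1 weighted_le
  calc g (2 + p + p⁻¹) ≤ C * (p ^ 2 + 1) := by nlinarith [mul_nonneg h2 (sq_nonneg p)]
    _ ≤ C * (2 + p + p⁻¹) ^ 2 := by gcongr; nlinarith

lemma OperatorConvex.exists_le_mul_sq (hg : OperatorConvex g) (hcont : ContinuousOn g (Set.Ioi 0))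
    (hnonneg : ∀ x, 0 < x → 0 ≤ g x) {m : ℝ} (hm : 0 < m) :
    ∃ K, 0 ≤ K ∧ ∀ x, m ≤ x → g x ≤ K * x ^ 2 := by
  have bounded_on_Icc : ∀ a b : ℝ, 0 < a → ∃ C, ∀ x ∈ Set.Icc a b, g x ≤ C := fun a b ha =>
    (isCompact_Icc.bddAbove_image (hcont.mono fun x hx => ha.trans_le hx.1)).imp
      fun C hC x hx => hC (Set.mem_image_of_mem g hx)
  obtain ⟨C, hC⟩ := bounded_on_Icc 1 5 one_pos
  obtain ⟨D, hD⟩ := bounded_on_Icc m 4 hm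
  have C_nonneg : 0 ≤ C := (hnonneg 1 one_pos).trans (hC 1 (by norm_num))
  refine ⟨max C (D / m ^ 2), le_max_of_le_left C_nonneg, fun x hx => ?_⟩
  rcases le_total 4 x with four_le | le_four
  · exact (hg.le_mul_sq_of_four_le hC (hnonneg 2 two_pos) four_le).trans
      (by gcongr; exact le_max_left _ _)
  · have D_nonneg : 0 ≤ D := (hnonneg x (hm.trans_le hx)).trans (hD x ⟨hx, le_four⟩)
    calc g x ≤ D := hD x ⟨hx, le_four⟩
      _ = D / m ^ 2 * m ^ 2 := by field_simp
      _ ≤ D / m ^ 2 * x ^ 2 :=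
          mul_le_mul_of_nonneg_left (pow_le_pow_left₀ hm.le hx 2)
            (div_nonneg D_nonneg (sq_nonneg m))
      _ ≤ max C (D / m ^ 2) * x ^ 2 := by gcongr; exact le_max_right _ _

end

/-! ### Antitonicity of operator log-convex functions -/

section

open scoped MatrixOrder
open Filter Topology

variable {n : ℕ} {ι : Type*} [Fintype ι] [DecidableEq ι] {g : ℝ → ℝ}

lemma warith_add_inv_smul_sub {s : ℝ} (hs : s ≠ 0) (A B : Matrix (Fin n) (Fin n) ℂ) :
    warith s A (A + s⁻¹ • (B - A)) = B := by
  rw [warith, smul_add, smul_inv_smul₀ hs]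
  module

lemma add_inv_smul_sub_le_inv_smul {ι : Type*} {A : Matrix ι ι ℂ} (hA : A.PosSemidef)
    (B : Matrix ι ι ℂ) {s : ℝ} (hs : s ∈ Set.Ioc (0 : ℝ) 1) :
    A + s⁻¹ • (B - A) ≤ s⁻¹ • B := by
  rw [← sub_nonneg, show s⁻¹ • B - (A + s⁻¹ • (B - A)) = (s⁻¹ - 1) • A by module]
  exact (hA.smul (sub_nonneg.2 ((one_le_inv₀ hs.1).2 hs.2))).nonneg

lemma sq_smul_cfc_le_algebraMap {C : Matrix ι ι ℂ} (hC : C.PosDef) {m K R s : ℝ}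
    (hK : 0 ≤ K) (hg : ∀ x, m ≤ x → g x ≤ K * x ^ 2) (hmC : algebraMap ℝ _ m ≤ C)
    (hs : 0 < s) (hCR : C ≤ algebraMap ℝ _ (s⁻¹ * R)) :
    s ^ 2 • cfc g C ≤ algebraMap ℝ _ (K * R ^ 2) := by
  have hC' := hC.isHermitian.isSelfAdjoint
  rw [← cfc_smul _ _ C (continuousOn_spectrum _ _)]
  refine cfc_le_algebraMap _ _ C (fun x hx => ?_) (continuousOn_spectrum _ _) hC'
  have x_pos : 0 < x := hC.isStrictlyPositive.spectrum_pos hx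
  have m_le : m ≤ x := (algebraMap_le_iff_le_spectrum hC').1 hmC x hx
  have le_R : s * x ≤ R :=
    (le_inv_mul_iff₀ hs).1 ((le_algebraMap_iff_spectrum_le hC').1 hCR x hx)
  calc s ^ 2 * g x ≤ s ^ 2 * (K * x ^ 2) := by gcongr; exact hg x m_le
    _ = K * (s * x) ^ 2 := by ring
    _ ≤ K * R ^ 2 := by gcongr

lemma OperatorLogConvex.cfc_le_rpow_smul (hg : OperatorLogConvex g)
    (hpos : ∀ x, 0 < x → 0 < g x) {A B : Matrix (Fin n) (Fin n) ℂ} (hA : A.PosDef) (hAB : A ≤ B)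
    {m K R : ℝ} (hK : 0 ≤ K)
    (hgrowth : ∀ x, m ≤ x → g x ≤ K * x ^ 2) (hmA : algebraMap ℝ _ m ≤ A)
    (hBR : B ≤ algebraMap ℝ _ R) {s : ℝ} (hs : s ∈ Set.Ioc (0 : ℝ) 1) :
    cfc g B ≤ (s ^ 2) ^ (-s) • warith s (cfc g A) (algebraMap ℝ _ (K * R ^ 2)) := by
  have hs' : s ∈ Set.Icc (0 : ℝ) 1 := ⟨hs.1.le, hs.2⟩
  let C := A + s⁻¹ • (B - A)
  have sub_nonneg : 0 ≤ s⁻¹ • (B - A) := smul_nonneg (inv_nonneg.2 hs.1.le) (sub_nonneg.2 hAB)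
  have C_posDef : C.PosDef := hA.add_posSemidef sub_nonneg.posSemidef
  have C_le : s ^ 2 • cfc g C ≤ algebraMap ℝ _ (K * R ^ 2) := by
    refine sq_smul_cfc_le_algebraMap C_posDef hK hgrowth
      (hmA.trans (le_add_of_nonneg_right sub_nonneg)) hs.1 ?_
    calc C ≤ s⁻¹ • B := add_inv_smul_sub_le_inv_smul hA.posSemidef B hs
      _ ≤ s⁻¹ • algebraMap ℝ _ R := smul_le_smul_of_nonneg_left hBR (inv_nonneg.2 hs.1.le)
      _ = algebraMap ℝ _ (s⁻¹ * R) := by rw [map_mul, Algebra.smul_def]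
  -- `g C` may be of order `s⁻²`, but rescaling it by `s ^ 2` costs only the factor
  -- `(s ^ 2) ^ (-s)`, which tends to `1` as `s → 0`.
  calc cfc g B = cfc g (warith s A C) := by rw [warith_add_inv_smul_sub hs.1.ne']
    _ ≤ wgeom s (cfc g A) (cfc g C) := hg n A C hA C_posDef s hs'
    _ ≤ (s ^ 2) ^ (-s) • warith s (cfc g A) (s ^ 2 • cfc g C) :=
        wgeom_le_rpow_smul_warith (posDef_cfc hA hpos) (posDef_cfc C_posDef hpos) hs'
          (pow_pos hs.1 2)
    _ ≤ (s ^ 2) ^ (-s) • warith s (cfc g A) (algebraMap ℝ _ (K * R ^ 2)) := by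
        unfold warith
        have := hs.1.le
        gcongr

lemma tendsto_sq_rpow_neg_self : Tendsto (fun s : ℝ => (s ^ 2) ^ (-s)) (𝓝[>] 0) (𝓝 1) := by
  have key : Tendsto (fun s : ℝ => Real.exp (2 * Real.negMulLog s)) (𝓝[>] 0) (𝓝 1) := by
    have h : ContinuousAt (fun s : ℝ => Real.exp (2 * Real.negMulLog s)) 0 := by fun_prop
    simpa using h.tendsto.mono_left nhdsWithin_le_nhds
  refine key.congr' (eventually_mem_nhdsWithin.mono fun s (hs : 0 < s) => ?_)
  simp only [Real.rpow_def_of_pos (pow_pos hs 2), Real.log_pow, Real.negMulLog]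
  push_cast
  ring_nf

lemma OperatorLogConvex.operatorAntitone (hg : OperatorLogConvex g)
    (hcont : ContinuousOn g (Set.Ioi 0)) (hpos : ∀ x, 0 < x → 0 < g x) : OperatorAntitone g := by
  intro n A B hA hB hAB
  obtain ⟨m, hm, hmA⟩ := exists_pos_algebraMap_le_of_posDef hA
  obtain ⟨R, hBR⟩ := exists_le_algebraMap_of_isHermitian hB.isHermitian
  obtain ⟨K, hK, hgrowth⟩ :=
    (hg.operatorConvex hpos).exists_le_mul_sq hcont (fun x hx => (hpos x hx).le) hm
  have limit : Tendsto (fun s : ℝ => (s ^ 2) ^ (-s) •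
      warith s (cfc g A) (algebraMap ℝ _ (K * R ^ 2))) (𝓝[>] 0) (𝓝 (cfc g A)) := by
    have warith_limit : Tendsto (fun s => warith s (cfc g A) (algebraMap ℝ _ (K * R ^ 2)))
        (𝓝[>] 0) (𝓝 (cfc g A)) := by
      have h : Continuous fun s => warith s (cfc g A) (algebraMap ℝ _ (K * R ^ 2)) := by
        unfold warith
        fun_prop
      simpa [warith] using (h.tendsto 0).mono_left nhdsWithin_le_nhds
    simpa using tendsto_sq_rpow_neg_self.smul warith_limit
  have bound : ∀ᶠ s in 𝓝[>] (0 : ℝ),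
      cfc g B ≤ (s ^ 2) ^ (-s) • warith s (cfc g A) (algebraMap ℝ _ (K * R ^ 2)) :=
    mem_of_superset (Ioc_mem_nhdsGT one_pos) fun s hs =>
      hg.cfc_le_rpow_smul hpos hA hAB hK hgrowth hmA hBR hs
  open scoped Matrix.Norms.L2Operator in
  exact ge_of_tendsto limit bound

end

/-! ### Functional calculus and algebra homomorphisms -/

section

variable {ι κ : Type*} [Fintype ι] [DecidableEq ι] [Fintype κ] [DecidableEq κ]
  {A : Matrix ι ι ℂ}

lemma exists_polynomial_eval_eq {K : Type*} [Field K] {T : Set K} (hT : T.Finite) (h : K → K) :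
    ∃ p : Polynomial K, ∀ x ∈ T, p.eval x = h x := by
  classical
  exact ⟨Lagrange.interpolate hT.toFinset id h, fun x hx =>
    Lagrange.eval_interpolate_at_node (v := id) h (by simp) (by simpa using hx)⟩

lemma cfc_eq_aeval (hA : A.IsHermitian) {h : ℝ → ℝ} {p : Polynomial ℝ}
    (hp : ∀ x ∈ spectrum ℝ A, p.eval x = h x) : cfc h A = Polynomial.aeval A p := by
  rw [← cfc_polynomial p A hA.isSelfAdjoint]
  exact cfc_congr fun x hx => (hp x hx).symm

lemma cfc_algHom_apply (φ : Matrix ι ι ℂ →ₐ[ℝ] Matrix κ κ ℂ) (hA : A.IsHermitian)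
    (hφA : (φ A).IsHermitian) (h : ℝ → ℝ) : cfc h (φ A) = φ (cfc h A) := by
  obtain ⟨p, hp⟩ := exists_polynomial_eval_eq (finite_real_spectrum (A := A)) h
  rw [cfc_eq_aeval hA hp, cfc_eq_aeval hφA fun x hx => hp x (AlgHom.spectrum_apply_subset φ A hx),
    Polynomial.aeval_algHom_apply]

lemma cfc_reindex (e : ι ≃ κ) (hA : A.IsHermitian) (h : ℝ → ℝ) :
    cfc h (reindex e e A) = reindex e e (cfc h A) :=
  cfc_algHom_apply (reindexAlgEquiv ℝ ℂ e : Matrix ι ι ℂ →ₐ[ℝ] Matrix κ κ ℂ) hA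
    (hA.submatrix e.symm) h

lemma cfc_star_mul_mul_unitary {U : Matrix ι ι ℂ} (hU : U ∈ unitary (Matrix ι ι ℂ))
    (hA : A.IsHermitian) (h : ℝ → ℝ) : cfc h (star U * A * U) = star U * cfc h A * U :=
  cfc_algHom_apply (Unitary.conjStarAlgAut ℝ (Matrix ι ι ℂ) ⟨U, hU⟩).symm.toAlgEquiv.toAlgHom hA
    (isHermitian_conjTranspose_mul_mul U hA) h

/-- The block diagonal embedding `(X, Y) ↦ diag(X, Y)`, as a homomorphism of real algebras, so that
it commutes with evaluating real polynomials. -/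
def blockDiagonalAlgHom :
    Matrix ι ι ℂ × Matrix κ κ ℂ →ₐ[ℝ] Matrix (ι ⊕ κ) (ι ⊕ κ) ℂ where
  toFun X := fromBlocks X.1 0 0 X.2
  map_one' := by simp
  map_zero' := by simp
  map_mul' _ _ := by simp [fromBlocks_multiply]
  map_add' _ _ := by simp [fromBlocks_add]
  commutes' r := by
    simp [Algebra.algebraMap_eq_smul_one, ← fromBlocks_one, fromBlocks_smul]

lemma cfc_fromBlocks_zero_zero {B : Matrix κ κ ℂ} (hA : A.IsHermitian) (hB : B.IsHermitian)
    (h : ℝ → ℝ) : cfc h (fromBlocks A 0 0 B) = fromBlocks (cfc h A) 0 0 (cfc h B) := by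
  obtain ⟨p, hp⟩ := exists_polynomial_eval_eq
    ((finite_real_spectrum (A := A)).union (finite_real_spectrum (A := B))) h
  have hp_blocks : ∀ x ∈ spectrum ℝ (fromBlocks A 0 0 B), p.eval x = h x := fun x hx =>
    hp x (Prod.spectrum_eq (R := ℝ) A B ▸
      AlgHom.spectrum_apply_subset blockDiagonalAlgHom (A, B) hx)
  calc cfc h (fromBlocks A 0 0 B) = Polynomial.aeval (blockDiagonalAlgHom (A, B)) p :=
        cfc_eq_aeval (.fromBlocks hA (by simp) hB) hp_blocks
    _ = blockDiagonalAlgHom (Polynomial.aeval (A, B) p) := Polynomial.aeval_algHom_apply ..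
    _ = fromBlocks (cfc h A) 0 0 (cfc h B) := by
        rw [Polynomial.aeval_prod_apply, cfc_eq_aeval hA fun x hx => hp x (.inl hx),
          cfc_eq_aeval hB fun x hx => hp x (.inr hx)]
        rfl

end

/-! ### Concavity of operator monotone functions -/

section

open scoped MatrixOrder

lemma fromBlocks_le_fromBlocks_iff {ι κ : Type*} {P P' : Matrix ι ι ℂ} {Q Q' : Matrix ι κ ℂ}
    {S S' : Matrix κ ι ℂ} {R R' : Matrix κ κ ℂ} :
    fromBlocks P Q S R ≤ fromBlocks P' Q' S' R' ↔
      (fromBlocks (P' - P) (Q' - Q) (S' - S) (R' - R)).PosSemidef := by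
  simp only [Matrix.le_iff, sub_eq_add_neg, fromBlocks_neg, fromBlocks_add]

lemma posDef_fromBlocks_zero_zero {ι κ : Type*} [Finite ι] [Finite κ] {A : Matrix ι ι ℂ}
    {B : Matrix κ κ ℂ} (hA : A.PosDef) (hB : B.PosDef) : (fromBlocks A 0 0 B).PosDef := by
  classical
  have := Fintype.ofFinite ι
  have := Fintype.ofFinite κ
  have := hA.isUnit.invertible
  have posSemidef := (PosDef.fromBlocks₁₁ (0 : Matrix ι κ ℂ) B hA).2 (by simpa using hB.posSemidef)
  rw [conjTranspose_zero] at posSemidef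
  rw [posSemidef.posDef_iff_isUnit, isUnit_iff_isUnit_det, det_fromBlocks_zero₂₁]
  exact ((isUnit_iff_isUnit_det _).1 hA.isUnit).mul ((isUnit_iff_isUnit_det _).1 hB.isUnit)

lemma exists_fromBlocks_le_fromBlocks_zero_zero {ι κ : Type*} [Finite ι] [Fintype κ]
    [DecidableEq κ] {X : Matrix ι ι ℂ} (hX : X.PosDef) (P : Matrix ι ι ℂ) (Q : Matrix ι κ ℂ)
    {R : Matrix κ κ ℂ} (hR : R.IsHermitian) :
    ∃ μ : ℝ, 0 < μ ∧ fromBlocks P Q Qᴴ R ≤ fromBlocks (P + X) 0 0 (algebraMap ℝ _ μ) := by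
  classical
  have := Fintype.ofFinite ι
  have := hX.isUnit.invertible
  have schur_isHermitian : (R + Qᴴ * X⁻¹ * Q).IsHermitian :=
    hR.add (isHermitian_conjTranspose_mul_mul Q hX.inv.isHermitian)
  obtain ⟨r, hr⟩ := exists_le_algebraMap_of_isHermitian schur_isHermitian
  have hμ : R + Qᴴ * X⁻¹ * Q ≤ algebraMap ℝ _ (max r 1) :=
    hr.trans (algebraMap_mono _ (le_max_left r 1))
  refine ⟨max r 1, by positivity, fromBlocks_le_fromBlocks_iff.2 ?_⟩
  rw [add_sub_cancel_left, zero_sub, zero_sub, ← conjTranspose_neg, PosDef.fromBlocks₁₁ _ _ hX]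
  simpa [sub_sub] using Matrix.le_iff.1 hμ

/-- The rotation of `ℂ^ι ⊕ ℂ^ι` with cosine `c` and sine `s`, as a block matrix. Conjugating
`diag(X, Y)` by it produces the mean of `X` and `Y` with weights `c ^ 2` and `s ^ 2` in a corner. -/
noncomputable def blockRotation (ι : Type*) [DecidableEq ι] (c s : ℝ) : Matrix (ι ⊕ ι) (ι ⊕ ι) ℂ :=
  fromBlocks (c • 1) (-(s • 1)) (s • 1) (c • 1)

lemma star_blockRotation {ι : Type*} [DecidableEq ι] (c s : ℝ) :
    star (blockRotation ι c s) = blockRotation ι c (-s) := by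
  simp [blockRotation, star_eq_conjTranspose, fromBlocks_conjTranspose]

variable {ι : Type*} [Fintype ι] [DecidableEq ι]

lemma blockRotation_mem_unitary {c s : ℝ} (hcs : c ^ 2 + s ^ 2 = 1) :
    blockRotation ι c s ∈ unitary (Matrix (ι ⊕ ι) (ι ⊕ ι) ℂ) := by
  rw [Unitary.mem_iff, star_blockRotation]
  rw [sq, sq] at hcs
  constructor <;>
    simp [blockRotation, fromBlocks_multiply, smul_smul, ← add_smul, hcs, mul_comm s c,
      add_comm (s * s)]

lemma star_blockRotation_mul_fromBlocks_mul (c s : ℝ) (X Y : Matrix ι ι ℂ) :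
    star (blockRotation ι c s) * fromBlocks X 0 0 Y * blockRotation ι c s =
      fromBlocks (c ^ 2 • X + s ^ 2 • Y) ((c * s) • (Y - X)) ((c * s) • (Y - X))
        (s ^ 2 • X + c ^ 2 • Y) := by
  rw [star_blockRotation]
  simp only [blockRotation, fromBlocks_multiply]
  congr 1 <;> simp [smul_smul, mul_comm s c, smul_sub, ← sq] <;> abel

end

section

open scoped MatrixOrder
open Filter Topology

variable {ι : Type*} [Fintype ι] [DecidableEq ι] {h : ℝ → ℝ}

lemma OperatorMonotone.cfc_le_cfc (hh : OperatorMonotone h) {A B : Matrix ι ι ℂ} (hA : A.PosDef)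
    (hB : B.PosDef) (hAB : A ≤ B) : cfc h A ≤ cfc h B := by
  let e := Fintype.equivFin ι
  have key := hh _ (reindex e e A) (reindex e e B) (hA.submatrix e.symm.injective)
    (hB.submatrix e.symm.injective) ((Matrix.le_iff.1 hAB).submatrix e.symm)
  rw [cfc_reindex e hA.isHermitian, cfc_reindex e hB.isHermitian] at key
  exact Matrix.le_iff.2 ((posSemidef_submatrix_equiv e.symm).1 key)

/-- Operator concavity on the positive definite matrices of every size; it holds for continuous
operator monotone functions. -/
def OperatorConcave (h : ℝ → ℝ) : Prop :=
  ∀ (n : ℕ) (A B : Matrix (Fin n) (Fin n) ℂ), A.PosDef → B.PosDef → ∀ t ∈ Set.Icc (0 : ℝ) 1,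
    warith t (cfc h A) (cfc h B) ≤ cfc h (warith t A B)

lemma star_blockRotation_sqrt_mul_fromBlocks_mul {n : ℕ} {t : ℝ} (ht : t ∈ Set.Icc (0 : ℝ) 1)
    (X Y : Matrix (Fin n) (Fin n) ℂ) :
    star (blockRotation (Fin n) √(1 - t) √t) * fromBlocks X 0 0 Y *
        blockRotation (Fin n) √(1 - t) √t =
      fromBlocks (warith t X Y) ((√(1 - t) * √t) • (Y - X)) ((√(1 - t) * √t) • (Y - X))
        (warith t Y X) := by
  rw [star_blockRotation_mul_fromBlocks_mul, Real.sq_sqrt (sub_nonneg.2 ht.2), Real.sq_sqrt ht.1,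
    warith, warith, add_comm (t • X)]

lemma OperatorMonotone.warith_cfc_le_cfc_smul (hh : OperatorMonotone h) {n : ℕ}
    {A B : Matrix (Fin n) (Fin n) ℂ} (hA : A.PosDef) (hB : B.PosDef) {t : ℝ}
    (ht : t ∈ Set.Icc (0 : ℝ) 1) {c : ℝ} (hc : 1 < c) :
    warith t (cfc h A) (cfc h B) ≤ cfc h (c • warith t A B) := by
  let U := blockRotation (Fin n) √(1 - t) √t
  have hU : U ∈ unitary _ := blockRotation_mem_unitary (by
    rw [Real.sq_sqrt (sub_nonneg.2 ht.2), Real.sq_sqrt ht.1, sub_add_cancel])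
  have hP := warith_posDef hA hB ht
  have hcP := hP.smul (one_pos.trans hc)
  have hD := posDef_fromBlocks_zero_zero hA hB
  have conj_posDef : (star U * fromBlocks A 0 0 B * U).PosDef :=
    hD.conjTranspose_mul_mul_same (mulVec_injective_of_isUnit (Unitary.isUnit_coe (U := ⟨U, hU⟩)))
  have off_diag : ((√(1 - t) * √t) • (B - A)).IsHermitian :=
    (hB.isHermitian.sub hA.isHermitian).smul (.all _)
  obtain ⟨μ, hμ, hle⟩ := exists_fromBlocks_le_fromBlocks_zero_zero (hP.smul (sub_pos.2 hc))
    (warith t A B) ((√(1 - t) * √t) • (B - A)) (warith_posDef hB hA ht).isHermitian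
  have hμ' : (algebraMap ℝ (Matrix (Fin n) (Fin n) ℂ) μ).PosDef := by
    simpa only [Algebra.algebraMap_eq_smul_one] using PosDef.one.smul hμ
  have dominated : star U * fromBlocks A 0 0 B * U ≤
      fromBlocks (c • warith t A B) 0 0 (algebraMap ℝ _ μ) := by
    rwa [off_diag.eq, ← star_blockRotation_sqrt_mul_fromBlocks_mul ht, sub_smul, one_smul,
      add_sub_cancel] at hle
  have cfc_dominated :=
    hh.cfc_le_cfc conj_posDef (posDef_fromBlocks_zero_zero hcP hμ') dominated
  rw [cfc_star_mul_mul_unitary hU hD.isHermitian,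
    cfc_fromBlocks_zero_zero hA.isHermitian hB.isHermitian,
    cfc_fromBlocks_zero_zero hcP.isHermitian hμ'.isHermitian,
    star_blockRotation_sqrt_mul_fromBlocks_mul ht, fromBlocks_le_fromBlocks_iff] at cfc_dominated
  exact cfc_dominated.submatrix Sum.inl

lemma tendsto_cfc_smul_one (hcont : ContinuousOn h (Set.Ioi 0)) {A : Matrix ι ι ℂ} (hA : A.PosDef) :
    Tendsto (fun c : ℝ => cfc h (c • A)) (𝓝 1) (𝓝 (cfc h A)) := by
  have cfc_smul_eq : ∀ c : ℝ, cfc h (c • A) = cfc (fun x => h (c * x)) A := fun c =>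
    (cfc_comp_smul c h A ((finite_real_spectrum.image _).continuousOn _)
      hA.isHermitian.isSelfAdjoint).symm
  simp only [cfc_smul_eq]
  have pointwise : ∀ x ∈ spectrum ℝ A, Tendsto (fun c : ℝ => h (c * x)) (𝓝 1) (𝓝 (h x)) := by
    intro x hx
    have hx₀ : 0 < x := hA.isStrictlyPositive.spectrum_pos hx
    exact (hcont.continuousAt (Ioi_mem_nhds hx₀)).tendsto.comp
      (by simpa using (continuous_mul_const x).tendsto (1 : ℝ))
  open scoped Matrix.Norms.L2Operator in
  refine tendsto_cfc_fun (Metric.tendstoUniformlyOn_iff.2 fun ε hε => ?_)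
    (.of_forall fun _ => continuousOn_spectrum _ _)
  refine finite_real_spectrum.eventually_all.2 fun x hx => ?_
  simpa only [dist_comm] using (pointwise x hx).eventually (Metric.ball_mem_nhds _ hε)

lemma OperatorMonotone.operatorConcave (hh : OperatorMonotone h)
    (hcont : ContinuousOn h (Set.Ioi 0)) : OperatorConcave h := by
  intro n A B hA hB t ht
  have limit := (tendsto_cfc_smul_one hcont (warith_posDef hA hB ht)).mono_left
    (nhdsWithin_le_nhds (s := Set.Ioi 1))
  open scoped Matrix.Norms.L2Operator in
  exact ge_of_tendsto limit (eventually_mem_nhdsWithin.mono fun c hc =>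
    hh.warith_cfc_le_cfc_smul hA hB ht hc)

end

/-! ### Functions of the inverse -/

section

open scoped MatrixOrder

variable {f : ℝ → ℝ}

lemma continuousOn_comp_inv (hf : ContinuousOn f (Set.Ioi 0)) :
    ContinuousOn (fun x => f x⁻¹) (Set.Ioi 0) :=
  hf.comp (continuousOn_inv₀.mono fun _ hx => ne_of_gt hx) fun _ hx => Set.mem_Ioi.2 (inv_pos.2 hx)

lemma OperatorAntitone.operatorMonotone_comp_inv (hf : OperatorAntitone f) :
    OperatorMonotone fun x => f x⁻¹ := fun n A B hA hB hAB => by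
  rw [← cfc_inv_apply hA, ← cfc_inv_apply hB]
  exact hf n B⁻¹ A⁻¹ hB.inv hA.inv (inv_le_inv_of_posDef hA hAB)

lemma operatorAntitone_of_inv_comp_inv (hpos : ∀ x, 0 < x → 0 < f x)
    (hf : OperatorAntitone fun x => (f x⁻¹)⁻¹) : OperatorAntitone f := fun n A B hA hB hAB => by
  have key := hf n B⁻¹ A⁻¹ hB.inv hA.inv (inv_le_inv_of_posDef hA hAB)
  simp only [cfc_inv_apply hA, cfc_inv_apply hB, inv_inv, ← inv_cfc hA hpos,
    ← inv_cfc hB hpos] at key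
  have inv_key := inv_le_inv_of_posDef (posDef_cfc hA hpos).inv key
  rwa [inv_inv_of_posDef (posDef_cfc hA hpos), inv_inv_of_posDef (posDef_cfc hB hpos)] at inv_key

lemma OperatorAntitone.wgeom_cfc_le_cfc_wharm (hf : OperatorAntitone f)
    (hcont : ContinuousOn f (Set.Ioi 0)) (hpos : ∀ x, 0 < x → 0 < f x) {n : ℕ}
    {A B : Matrix (Fin n) (Fin n) ℂ} (hA : A.PosDef) (hB : B.PosDef) {t : ℝ}
    (ht : t ∈ Set.Icc (0 : ℝ) 1) : wgeom t (cfc f A) (cfc f B) ≤ cfc f (wharm t A B) := by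
  have concave := hf.operatorMonotone_comp_inv.operatorConcave (continuousOn_comp_inv hcont)
    n A⁻¹ B⁻¹ hA.inv hB.inv t ht
  calc wgeom t (cfc f A) (cfc f B) ≤ warith t (cfc f A) (cfc f B) :=
        wgeom_le_warith (posDef_cfc hA hpos) (posDef_cfc hB hpos) ht
    _ ≤ cfc (fun x => f x⁻¹) (warith t A⁻¹ B⁻¹) := by
        simpa only [cfc_inv_apply hA, cfc_inv_apply hB, inv_inv] using concave
    _ = cfc f (wharm t A B) := (cfc_inv_apply (warith_posDef hA.inv hB.inv ht) f).symm

lemma operatorLogConvex_inv_comp_inv (hpos : ∀ x, 0 < x → 0 < f x)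
    (hf : ∀ (n : ℕ) (A B : Matrix (Fin n) (Fin n) ℂ), A.PosDef → B.PosDef →
      ∀ t ∈ Set.Icc (0 : ℝ) 1, wgeom t (cfc f A) (cfc f B) ≤ cfc f (wharm t A B)) :
    OperatorLogConvex fun x => (f x⁻¹)⁻¹ := fun n A B hA hB t ht => by
  have cfc_eq : ∀ {M : Matrix (Fin n) (Fin n) ℂ}, M.PosDef →
      cfc (fun x => (f x⁻¹)⁻¹) M = (cfc f M⁻¹)⁻¹ := fun hM => by
    rw [inv_cfc hM.inv hpos, cfc_inv_apply hM]
  have hfA := posDef_cfc hA.inv hpos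
  have hfB := posDef_cfc hB.inv hpos
  have wharm_inv : wharm t A⁻¹ B⁻¹ = (warith t A B)⁻¹ := by
    rw [wharm, warith, inv_inv_of_posDef hA, inv_inv_of_posDef hB]
  rw [cfc_eq hA, cfc_eq hB, cfc_eq (warith_posDef hA hB ht), wgeom_inv_inv hfA hfB, ← wharm_inv]
  exact inv_le_inv_of_posDef (wgeom_posDef hfA hfB t) (hf n A⁻¹ B⁻¹ hA.inv hB.inv t ht)

lemma operatorAntitone_of_wgeom_cfc_le_cfc_wharm (hcont : ContinuousOn f (Set.Ioi 0))
    (hpos : ∀ x, 0 < x → 0 < f x)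
    (hf : ∀ (n : ℕ) (A B : Matrix (Fin n) (Fin n) ℂ), A.PosDef → B.PosDef →
      ∀ t ∈ Set.Icc (0 : ℝ) 1, wgeom t (cfc f A) (cfc f B) ≤ cfc f (wharm t A B)) :
    OperatorAntitone f := by
  have hpos_inv : ∀ x, 0 < x → 0 < f x⁻¹ := fun x hx => hpos _ (inv_pos.2 hx)
  exact operatorAntitone_of_inv_comp_inv hpos <|
    (operatorLogConvex_inv_comp_inv hpos hf).operatorAntitone
      ((continuousOn_comp_inv hcont).inv₀ fun x hx => (hpos_inv x hx).ne')
      fun x hx => inv_pos.2 (hpos_inv x hx)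

end

theorem stmt_10 (f : ℝ → ℝ) (hf : ContinuousOn f (Set.Ioi 0))
    (hf' : ∀ x ∈ Set.Ioi (0:ℝ), f x ∈ Set.Ioi (0:ℝ)) :
    OperatorAntitone f ↔
      ∀ (n : ℕ) (A B : Matrix (Fin n) (Fin n) ℂ), A.PosDef → B.PosDef →
        ∀ t ∈ Set.Icc (0:ℝ) 1,
          MLE (wgeom t (cfc f A) (cfc f B)) (cfc f (wharm t A B)) := by
  constructor
  · intro hanti n A B hA hB t ht
    exact hanti.wgeom_cfc_le_cfc_wharm hf hf' hA hB ht
  · exact operatorAntitone_of_wgeom_cfc_le_cfc_wharm hf hf'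
end

section
/- For every n ∈ ℕ, all n×n positive definite complex matrices A, B, and every t ∈ [0,1], one has log((A !_t B) + I) ≤ log(A + I) !_t log(B + I) in the Loewner order, where I is the identity matrix. -/
open Matrix
open scoped ComplexOrder

/-!
For `s ≥ 0` the Yosida approximation `a ↦ (a⁻¹ + s)⁻¹` commutes with the harmonic mean, because the
latter is arithmetic in the inverses; and `log (a + 1)` is the integral of the Yosida approximations
of `a` over `s ∈ [0, 1]`. It remains to see that the harmonic mean satisfies Jensen's inequality
`∫ (F !_t G) ≤ (∫ F) !_t (∫ G)`, which holds since `a !_t b` is the minimum of the expressions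
`(1 - t) y⋆ a y + t z⋆ b z`, linear in `(a, b)`, over all `y`, `z` with `(1 - t) y + t z = 1`.
-/

open scoped Ring

section Definitions

variable {R : Type*} [Ring R] [Algebra ℝ R]

/-- The `t`-weighted harmonic mean of two units of a real algebra, as `wharm` for matrices. The
inverse `⁻¹ʳ` of a non-unit is `0`. -/
noncomputable def harmonicMean (t : ℝ) (a b : R) : R := ((1 - t) • a⁻¹ʳ + t • b⁻¹ʳ)⁻¹ʳ

/-- The Yosida approximation `a (1 + s a)⁻¹` of a unit `a`, written as `(a⁻¹ + s)⁻¹`; its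
integral over `s ∈ [0, 1]` is `log (a + 1)`. -/
noncomputable def yosidaApprox (s : ℝ) (a : R) : R := (a⁻¹ʳ + algebraMap ℝ R s)⁻¹ʳ

end Definitions

section StarRing

variable {R : Type*} [Ring R] [StarRing R] {a : R}

lemma star_ringInverse_mul_mul_ringInverse_mul (ha : IsSelfAdjoint a) (ha_unit : IsUnit a) (h : R) :
    star (a⁻¹ʳ * h) * a * (a⁻¹ʳ * h) = star h * (a⁻¹ʳ * h) := by
  rw [mul_assoc, Ring.mul_inverse_cancel_left _ _ ha_unit, star_mul, ha.ringInverse.star_eq,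
    mul_assoc]

lemma star_mul_mul_sub_ringInverse_mul (ha : IsSelfAdjoint a) (ha_unit : IsUnit a)
    {h : R} (hh : IsSelfAdjoint h) (y : R) :
    star (y - a⁻¹ʳ * h) * a * (y - a⁻¹ʳ * h) =
      star y * a * y - star y * h - h * y + h * (a⁻¹ʳ * h) := by
  have inv_mul (x : R) : a⁻¹ʳ * (a * x) = x := Ring.inverse_mul_cancel_left _ _ ha_unit
  have mul_inv (x : R) : a * (a⁻¹ʳ * x) = x := Ring.mul_inverse_cancel_left _ _ ha_unit
  simp only [star_sub, star_mul, hh.star_eq, ha.ringInverse.star_eq, sub_mul, mul_sub, mul_assoc,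
    inv_mul, mul_inv]
  abel

end StarRing

section CStarAlgebra

open MeasureTheory Set

variable {𝔸 : Type*} [CStarAlgebra 𝔸] [PartialOrder 𝔸] [StarOrderedRing 𝔸]

section HarmonicMean

variable {a b : 𝔸} {t : ℝ}

lemma isStrictlyPositive_weightedSum_ringInverse (ha : IsStrictlyPositive a)
    (hb : IsStrictlyPositive b) (ht : t ∈ Icc (0 : ℝ) 1) :
    IsStrictlyPositive ((1 - t) • a⁻¹ʳ + t • b⁻¹ʳ) :=
  CStarAlgebra.convexOn_ringInverse.1 ha.ringInverse hb.ringInverse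
    (sub_nonneg.2 ht.2) ht.1 (sub_add_cancel 1 t)

lemma isStrictlyPositive_harmonicMean (ha : IsStrictlyPositive a) (hb : IsStrictlyPositive b)
    (ht : t ∈ Icc (0 : ℝ) 1) : IsStrictlyPositive (harmonicMean t a b) :=
  (isStrictlyPositive_weightedSum_ringInverse ha hb ht).ringInverse

lemma ringInverse_harmonicMean (ha : IsStrictlyPositive a) (hb : IsStrictlyPositive b)
    (ht : t ∈ Icc (0 : ℝ) 1) : (harmonicMean t a b)⁻¹ʳ = (1 - t) • a⁻¹ʳ + t • b⁻¹ʳ :=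
  Ring.inverse_inverse (isStrictlyPositive_weightedSum_ringInverse ha hb ht).isUnit

lemma weightedSum_ringInverse_mul_harmonicMean (ha : IsStrictlyPositive a)
    (hb : IsStrictlyPositive b) (ht : t ∈ Icc (0 : ℝ) 1) :
    (1 - t) • (a⁻¹ʳ * harmonicMean t a b) + t • (b⁻¹ʳ * harmonicMean t a b) = 1 := by
  rw [← smul_mul_assoc, ← smul_mul_assoc, ← add_mul, harmonicMean,
    Ring.mul_inverse_cancel _ (isStrictlyPositive_weightedSum_ringInverse ha hb ht).isUnit]

lemma harmonicMean_le_of_weightedSum_eq_one (ha : IsStrictlyPositive a) (hb : IsStrictlyPositive b)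
    (ht : t ∈ Icc (0 : ℝ) 1) {y z : 𝔸} (hyz : (1 - t) • y + t • z = 1) :
    harmonicMean t a b ≤ (1 - t) • (star y * a * y) + t • (star z * b * z) := by
  set h := harmonicMean t a b
  have hh : IsSelfAdjoint h := (isStrictlyPositive_harmonicMean ha hb ht).isSelfAdjoint
  have hyz_star : (1 - t) • star y + t • star z = 1 := by simpa using congrArg star hyz
  have completed_square :
      (1 - t) • (star (y - a⁻¹ʳ * h) * a * (y - a⁻¹ʳ * h)) +
        t • (star (z - b⁻¹ʳ * h) * b * (z - b⁻¹ʳ * h)) =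
      (1 - t) • (star y * a * y) + t • (star z * b * z) - h := calc
    _ = (1 - t) • (star y * a * y) + t • (star z * b * z)
          - ((1 - t) • star y + t • star z) * h - h * ((1 - t) • y + t • z)
          + h * ((1 - t) • (a⁻¹ʳ * h) + t • (b⁻¹ʳ * h)) := by
      rw [star_mul_mul_sub_ringInverse_mul ha.isSelfAdjoint ha.isUnit hh,
        star_mul_mul_sub_ringInverse_mul hb.isSelfAdjoint hb.isUnit hh]
      simp only [smul_add, smul_sub, add_mul, mul_add, smul_mul_assoc, mul_smul_comm]
      abel
    _ = _ := by
      rw [weightedSum_ringInverse_mul_harmonicMean ha hb ht, hyz, hyz_star, one_mul, mul_one,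
        sub_add_cancel]
  rw [← sub_nonneg, ← completed_square]
  exact add_nonneg
    (smul_nonneg (sub_nonneg.2 ht.2) (star_left_conjugate_nonneg ha.nonneg _))
    (smul_nonneg ht.1 (star_left_conjugate_nonneg hb.nonneg _))

lemma harmonicMean_eq_weightedSum_conj (ha : IsStrictlyPositive a) (hb : IsStrictlyPositive b)
    (ht : t ∈ Icc (0 : ℝ) 1) :
    harmonicMean t a b =
      (1 - t) • (star (a⁻¹ʳ * harmonicMean t a b) * a * (a⁻¹ʳ * harmonicMean t a b)) +
        t • (star (b⁻¹ʳ * harmonicMean t a b) * b * (b⁻¹ʳ * harmonicMean t a b)) := by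
  rw [star_ringInverse_mul_mul_ringInverse_mul ha.isSelfAdjoint ha.isUnit,
    star_ringInverse_mul_mul_ringInverse_mul hb.isSelfAdjoint hb.isUnit,
    ← mul_smul_comm, ← mul_smul_comm t, ← mul_add,
    weightedSum_ringInverse_mul_harmonicMean ha hb ht, mul_one,
    (isStrictlyPositive_harmonicMean ha hb ht).isSelfAdjoint.star_eq]

theorem integral_harmonicMean_le {Ω : Type*} [MeasurableSpace Ω] {μ : Measure Ω} {F G : Ω → 𝔸}
    (hF : ∀ᵐ ω ∂μ, IsStrictlyPositive (F ω)) (hG : ∀ᵐ ω ∂μ, IsStrictlyPositive (G ω))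
    (hF_int : Integrable F μ) (hG_int : Integrable G μ)
    (hF_pos : IsStrictlyPositive (∫ ω, F ω ∂μ)) (hG_pos : IsStrictlyPositive (∫ ω, G ω ∂μ))
    (ht : t ∈ Icc (0 : ℝ) 1) :
    ∫ ω, harmonicMean t (F ω) (G ω) ∂μ ≤ harmonicMean t (∫ ω, F ω ∂μ) (∫ ω, G ω ∂μ) := by
  set h := harmonicMean t (∫ ω, F ω ∂μ) (∫ ω, G ω ∂μ)
  set y := (∫ ω, F ω ∂μ)⁻¹ʳ * h
  set z := (∫ ω, G ω ∂μ)⁻¹ʳ * h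
  let conj (x : 𝔸) : 𝔸 →L[ℝ] 𝔸 := ContinuousLinearMap.mulLeftRight ℝ 𝔸 (star x) x
  have hF_conj : Integrable (fun ω ↦ (1 - t) • (star y * F ω * y)) μ :=
    ((conj y).integrable_comp hF_int).smul (1 - t)
  have hG_conj : Integrable (fun ω ↦ t • (star z * G ω * z)) μ :=
    ((conj z).integrable_comp hG_int).smul t
  calc ∫ ω, harmonicMean t (F ω) (G ω) ∂μ
      ≤ ∫ ω, (1 - t) • (star y * F ω * y) + t • (star z * G ω * z) ∂μ := by
        refine integral_mono_of_nonneg ?_ (hF_conj.add hG_conj) ?_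
        · filter_upwards [hF, hG] with ω hFω hGω
          exact (isStrictlyPositive_harmonicMean hFω hGω ht).nonneg
        · filter_upwards [hF, hG] with ω hFω hGω
          exact harmonicMean_le_of_weightedSum_eq_one hFω hGω ht
            (weightedSum_ringInverse_mul_harmonicMean hF_pos hG_pos ht)
    _ = (1 - t) • (star y * (∫ ω, F ω ∂μ) * y) + t • (star z * (∫ ω, G ω ∂μ) * z) := by
        rw [integral_add hF_conj hG_conj, integral_smul, integral_smul]
        exact congrArg₂ (fun p q ↦ (1 - t) • p + t • q)
          ((conj y).integral_comp_comm hF_int) ((conj z).integral_comp_comm hG_int)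
    _ = h := (harmonicMean_eq_weightedSum_conj hF_pos hG_pos ht).symm

end HarmonicMean

section YosidaApprox

variable {a b : 𝔸} {s t : ℝ} {S : Set ℝ} {ν : Measure ℝ}

lemma isStrictlyPositive_ringInverse_add_algebraMap (ha : IsStrictlyPositive a) (hs : 0 ≤ s) :
    IsStrictlyPositive (a⁻¹ʳ + algebraMap ℝ 𝔸 s) :=
  ha.ringInverse.add_nonneg (algebraMap_nonneg 𝔸 hs)

lemma isStrictlyPositive_yosidaApprox (ha : IsStrictlyPositive a) (hs : 0 ≤ s) :
    IsStrictlyPositive (yosidaApprox s a) :=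
  (isStrictlyPositive_ringInverse_add_algebraMap ha hs).ringInverse

lemma ringInverse_yosidaApprox (ha : IsStrictlyPositive a) (hs : 0 ≤ s) :
    (yosidaApprox s a)⁻¹ʳ = a⁻¹ʳ + algebraMap ℝ 𝔸 s :=
  Ring.inverse_inverse (isStrictlyPositive_ringInverse_add_algebraMap ha hs).isUnit

theorem yosidaApprox_harmonicMean (ha : IsStrictlyPositive a) (hb : IsStrictlyPositive b)
    (ht : t ∈ Icc (0 : ℝ) 1) (hs : 0 ≤ s) :
    yosidaApprox s (harmonicMean t a b) =
      harmonicMean t (yosidaApprox s a) (yosidaApprox s b) := by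
  rw [yosidaApprox, ringInverse_harmonicMean ha hb ht, harmonicMean,
    ringInverse_yosidaApprox ha hs, ringInverse_yosidaApprox hb hs]
  congr 1
  module

lemma continuousOn_inv_add_inv :
    ContinuousOn (Function.uncurry fun s x : ℝ ↦ (x⁻¹ + s)⁻¹) (Ici 0 ×ˢ Ioi 0) := by
  refine ContinuousOn.inv₀ (.add (.inv₀ (by fun_prop) ?_) (by fun_prop)) ?_
  · exact fun p hp ↦ (mem_Ioi.1 hp.2).ne'
  · exact fun p hp ↦ (add_pos_of_pos_of_nonneg (inv_pos.2 hp.2) hp.1).ne'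

lemma norm_inv_add_inv_le {x : ℝ} (hx : 0 < x) (hs : 0 ≤ s) : ‖(x⁻¹ + s)⁻¹‖ ≤ x := by
  rw [Real.norm_of_nonneg (by positivity)]
  exact inv_le_of_inv_le₀ hx (le_add_of_nonneg_right hs)

lemma cfc_inv_add_inv (ha : IsStrictlyPositive a) (hs : 0 ≤ s) :
    cfc (fun x : ℝ ↦ (x⁻¹ + s)⁻¹) a = yosidaApprox s a := by
  have hpos (x : ℝ) (hx : x ∈ spectrum ℝ a) : 0 < x := ha.spectrum_pos hx
  have hcont : ContinuousOn (fun x : ℝ ↦ x⁻¹) (spectrum ℝ a) :=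
    continuousOn_id.inv₀ fun x hx ↦ (hpos x hx).ne'
  have hne (x : ℝ) (hx : x ∈ spectrum ℝ a) : x⁻¹ + s ≠ 0 := by have := hpos x hx; positivity
  rw [cfc_inv (fun x : ℝ ↦ x⁻¹ + s) a hne (hcont.add continuousOn_const),
    cfc_add_const s (fun x : ℝ ↦ x⁻¹) a hcont,
    cfc_ringInverse_id a ha.isUnit, yosidaApprox]

lemma continuousOn_inv_add_inv_spectrum (ha : IsStrictlyPositive a) (hS : S ⊆ Ici 0) :
    ContinuousOn (Function.uncurry fun s x : ℝ ↦ (x⁻¹ + s)⁻¹) (S ×ˢ spectrum ℝ a) :=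
  continuousOn_inv_add_inv.mono (prod_mono hS fun _ hx ↦ ha.spectrum_pos hx)

lemma ae_norm_inv_add_inv_le (ha : IsStrictlyPositive a) (hS : S ⊆ Ici 0)
    (hS_meas : MeasurableSet S) :
    ∀ᵐ s ∂ν.restrict S, ∀ x ∈ spectrum ℝ a, ‖(x⁻¹ + s)⁻¹‖ ≤ ‖a‖ * ‖(1 : 𝔸)‖ :=
  ae_restrict_of_forall_mem hS_meas fun _ hs x hx ↦
    (norm_inv_add_inv_le (ha.spectrum_pos hx) (hS hs)).trans
      ((le_abs_self x).trans (spectrum.norm_le_norm_mul_of_mem hx))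

lemma integrableOn_yosidaApprox (ha : IsStrictlyPositive a) (hS : S ⊆ Ici 0)
    (hS_meas : MeasurableSet S) (hνS : ν S ≠ ⊤) :
    IntegrableOn (fun s ↦ yosidaApprox s a) S ν :=
  (integrableOn_cfc hS_meas _ _ a (continuousOn_inv_add_inv_spectrum ha hS)
    (ae_norm_inv_add_inv_le ha hS hS_meas) (integrableOn_const hνS).hasFiniteIntegral).congr_fun
    (fun _ hs ↦ cfc_inv_add_inv ha (hS hs)) hS_meas

lemma setIntegral_yosidaApprox (ha : IsStrictlyPositive a) (hS : S ⊆ Ici 0)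
    (hS_meas : MeasurableSet S) (hνS : ν S ≠ ⊤) :
    ∫ s in S, yosidaApprox s a ∂ν = cfc (fun x : ℝ ↦ ∫ s in S, (x⁻¹ + s)⁻¹ ∂ν) a := by
  rw [cfc_setIntegral hS_meas _ _ a (continuousOn_inv_add_inv_spectrum ha hS)
    (ae_norm_inv_add_inv_le ha hS hS_meas) (integrableOn_const hνS).hasFiniteIntegral]
  exact setIntegral_congr_fun hS_meas fun _ hs ↦ (cfc_inv_add_inv ha (hS hs)).symm

end YosidaApprox

section Log

variable {a b : 𝔸} {t : ℝ}

lemma setIntegral_inv_add_inv {x : ℝ} (hx : 0 < x) :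
    ∫ s in Icc (0 : ℝ) 1, (x⁻¹ + s)⁻¹ = Real.log (x + 1) := by
  rw [integral_Icc_eq_integral_Ioc, ← intervalIntegral.integral_of_le zero_le_one,
    intervalIntegral.integral_comp_add_left (fun s ↦ s⁻¹),
    integral_inv_of_pos (by positivity) (by positivity)]
  congr 1
  field_simp
  ring

lemma log_add_one_eq_cfc (ha : IsStrictlyPositive a) :
    CFC.log (a + 1) = cfc (fun x : ℝ ↦ Real.log (x + 1)) a := by
  have hcont : ContinuousOn Real.log ((fun x : ℝ ↦ x + 1) '' spectrum ℝ a) := by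
    refine Real.continuousOn_log.mono ?_
    rintro _ ⟨x, hx, rfl⟩
    exact (add_pos (ha.spectrum_pos hx) one_pos).ne'
  rw [cfc_comp' Real.log (fun x : ℝ ↦ x + 1) a hcont, cfc_add_const 1 (fun x : ℝ ↦ x) a,
    cfc_id' ℝ a, map_one, CFC.log]

lemma isStrictlyPositive_log_add_one (ha : IsStrictlyPositive a) :
    IsStrictlyPositive (CFC.log (a + 1)) := by
  have hpos (x : ℝ) (hx : x ∈ spectrum ℝ a) : 0 < x := ha.spectrum_pos hx
  have hcont : ContinuousOn (fun x : ℝ ↦ Real.log (x + 1)) (spectrum ℝ a) :=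
    ContinuousOn.log (by fun_prop) fun x hx ↦ (add_pos (hpos x hx) one_pos).ne'
  rw [log_add_one_eq_cfc ha, cfc_isStrictlyPositive_iff _ a hcont]
  exact fun x hx ↦ Real.log_pos (lt_add_of_pos_left 1 (hpos x hx))

theorem log_add_one_eq_setIntegral_yosidaApprox (ha : IsStrictlyPositive a) :
    CFC.log (a + 1) = ∫ s in Icc (0 : ℝ) 1, yosidaApprox s a := by
  rw [setIntegral_yosidaApprox ha Icc_subset_Ici_self measurableSet_Icc measure_Icc_lt_top.ne,
    log_add_one_eq_cfc ha]
  exact cfc_congr fun x hx ↦ (setIntegral_inv_add_inv (ha.spectrum_pos hx)).symm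

theorem stmt_14_general (ha : IsStrictlyPositive a) (hb : IsStrictlyPositive b)
    (ht : t ∈ Icc (0 : ℝ) 1) :
    CFC.log (harmonicMean t a b + 1) ≤
      harmonicMean t (CFC.log (a + 1)) (CFC.log (b + 1)) := by
  have yosida_pos {c : 𝔸} (hc : IsStrictlyPositive c) :
      ∀ᵐ s ∂volume.restrict (Icc (0 : ℝ) 1), IsStrictlyPositive (yosidaApprox s c) :=
    ae_restrict_of_forall_mem measurableSet_Icc fun s hs ↦ isStrictlyPositive_yosidaApprox hc hs.1
  have yosida_int {c : 𝔸} (hc : IsStrictlyPositive c) :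
      IntegrableOn (fun s ↦ yosidaApprox s c) (Icc (0 : ℝ) 1) :=
    integrableOn_yosidaApprox hc Icc_subset_Ici_self measurableSet_Icc measure_Icc_lt_top.ne
  have integral_pos {c : 𝔸} (hc : IsStrictlyPositive c) :
      IsStrictlyPositive (∫ s in Icc (0 : ℝ) 1, yosidaApprox s c) :=
    log_add_one_eq_setIntegral_yosidaApprox hc ▸ isStrictlyPositive_log_add_one hc
  calc CFC.log (harmonicMean t a b + 1)
      = ∫ s in Icc (0 : ℝ) 1, yosidaApprox s (harmonicMean t a b) :=
        log_add_one_eq_setIntegral_yosidaApprox (isStrictlyPositive_harmonicMean ha hb ht)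
    _ = ∫ s in Icc (0 : ℝ) 1, harmonicMean t (yosidaApprox s a) (yosidaApprox s b) :=
        setIntegral_congr_fun measurableSet_Icc
          fun s hs ↦ yosidaApprox_harmonicMean ha hb ht hs.1
    _ ≤ harmonicMean t (∫ s in Icc (0 : ℝ) 1, yosidaApprox s a)
          (∫ s in Icc (0 : ℝ) 1, yosidaApprox s b) :=
        integral_harmonicMean_le (yosida_pos ha) (yosida_pos hb) (yosida_int ha) (yosida_int hb)
          (integral_pos ha) (integral_pos hb) ht
    _ = harmonicMean t (CFC.log (a + 1)) (CFC.log (b + 1)) := by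
        rw [log_add_one_eq_setIntegral_yosidaApprox ha, log_add_one_eq_setIntegral_yosidaApprox hb]

end Log

end CStarAlgebra

lemma wharm_eq_harmonicMean {n : ℕ} (t : ℝ) (A B : Matrix (Fin n) (Fin n) ℂ) :
    wharm t A B = harmonicMean t A B := by
  simp only [wharm, harmonicMean, Matrix.nonsing_inv_eq_ringInverse]

theorem stmt_14 (n : ℕ) (A B : Matrix (Fin n) (Fin n) ℂ)
    (hA : A.PosDef) (hB : B.PosDef) (t : ℝ) (ht : t ∈ Set.Icc (0:ℝ) 1) :
    MLE (cfc Real.log (wharm t A B + 1))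
      (wharm t (cfc Real.log (A + 1)) (cfc Real.log (B + 1))) := by
  open scoped MatrixOrder Matrix.Norms.L2Operator in
  rw [wharm_eq_harmonicMean, wharm_eq_harmonicMean]
  exact Matrix.le_iff.1 (stmt_14_general hA.isStrictlyPositive hB.isStrictlyPositive ht)
end

section
/- For every n ∈ ℕ, all n×n positive definite complex matrices A, B, C, and all α, t ∈ [0,1], one has A #_α (B ∇_t C) ≥ (A #_α B) ∇_t (A #_α C) in the Loewner order. -/
open Matrix
open scoped ComplexOrder

/-! The map `B ↦ A #_α B` is `b ↦ s⋆ (c⋆ b c)^α s` with `s = A^{1/2}` and `c = A^{-1/2}`.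
Conjugation `x ↦ c⋆ x c` is linear and monotone, so it preserves concavity both as an inner and as
an outer map, and the claim reduces to operator concavity of `x ↦ x^α` on the positive cone. -/

section Conjugation

variable {𝕜 R : Type*} [CommSemiring 𝕜] [PartialOrder 𝕜] [NonUnitalSemiring R] [PartialOrder R]
  [StarRing R] [StarOrderedRing R] [Module 𝕜 R] [SMulCommClass 𝕜 R R] [IsScalarTower 𝕜 R R]

theorem concaveOn_star_left_conjugate {E : Type*} [AddCommMonoid E] [SMul 𝕜 E] {S : Set E}
    {f : E → R} (hf : ConcaveOn 𝕜 S f) (c : R) : ConcaveOn 𝕜 S fun x => star c * f x * c := by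
  refine ⟨hf.1, fun x hx y hy a b ha hb hab => ?_⟩
  calc a • (star c * f x * c) + b • (star c * f y * c)
      = star c * (a • f x + b • f y) * c := by
        simp only [mul_add, add_mul, mul_smul_comm, smul_mul_assoc]
    _ ≤ star c * f (a • x + b • y) * c :=
        star_left_conjugate_le_conjugate (hf.2 hx hy ha hb hab) c

theorem concaveOn_comp_star_left_conjugate {β : Type*} [AddCommMonoid β] [PartialOrder β]
    [SMul 𝕜 β] {f : R → β} (hf : ConcaveOn 𝕜 (Set.Ici 0) f) (c : R) :
    ConcaveOn 𝕜 (Set.Ici 0) fun x => f (star c * x * c) :=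
  (hf.comp_linearMap (LinearMap.mulLeftRight 𝕜 (star c, c))).subset
    (fun _ hx => star_left_conjugate_nonneg hx c) hf.1

end Conjugation

theorem stmt_16_general {𝒜 : Type*} [CStarAlgebra 𝒜] [PartialOrder 𝒜] [StarOrderedRing 𝒜]
    {α : ℝ} (hα : α ∈ Set.Icc (0 : ℝ) 1) (s c : 𝒜) :
    ConcaveOn ℝ (Set.Ici 0) fun b : 𝒜 => star s * (star c * b * c) ^ α * s :=
  concaveOn_star_left_conjugate
    (concaveOn_comp_star_left_conjugate (CFC.concaveOn_rpow hα) c) s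

section MatrixMeans

open scoped MatrixOrder Matrix.Norms.L2Operator

variable {n : ℕ}

theorem mpow_eq_rpow {X : Matrix (Fin n) (Fin n) ℂ} (hX : 0 ≤ X) (r : ℝ) : mpow X r = X ^ r :=
  (CFC.rpow_eq_cfc_real hX).symm

theorem isSelfAdjoint_mpow (X : Matrix (Fin n) (Fin n) ℂ) (r : ℝ) : IsSelfAdjoint (mpow X r) :=
  cfc_predicate _ X

theorem wgeom_eq_star_conjugate_rpow (α : ℝ) (A : Matrix (Fin n) (Fin n) ℂ)
    {B : Matrix (Fin n) (Fin n) ℂ} (hB : 0 ≤ B) :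
    wgeom α A B = star (mpow A (1 / 2)) *
      (star (mpow A (-(1 / 2))) * B * mpow A (-(1 / 2))) ^ α * mpow A (1 / 2) := by
  rw [← mpow_eq_rpow (star_left_conjugate_nonneg hB _), (isSelfAdjoint_mpow A _).star_eq,
    (isSelfAdjoint_mpow A _).star_eq, wgeom]

theorem concaveOn_wgeom {α : ℝ} (hα : α ∈ Set.Icc (0 : ℝ) 1) (A : Matrix (Fin n) (Fin n) ℂ) :
    ConcaveOn ℝ (Set.Ici 0) (wgeom α A) :=
  (stmt_16_general hα _ _).congr fun _ hB => (wgeom_eq_star_conjugate_rpow α A hB).symm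

end MatrixMeans

theorem stmt_16 (n : ℕ) (A B C : Matrix (Fin n) (Fin n) ℂ)
    (hA : A.PosDef) (hB : B.PosDef) (hC : C.PosDef)
    (α : ℝ) (hα : α ∈ Set.Icc (0:ℝ) 1) (t : ℝ) (ht : t ∈ Set.Icc (0:ℝ) 1) :
    MLE (warith t (wgeom α A B) (wgeom α A C)) (wgeom α A (warith t B C)) :=
  Matrix.le_iff.1 <| (concaveOn_wgeom hα A).2 hB.posSemidef.nonneg hC.posSemidef.nonneg
    (sub_nonneg.2 ht.2) ht.1 (sub_add_cancel 1 t)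
end
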